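/- arXiv:2109.02334 — 5 statements merged into one kernel-verified Lean document; each statement's English description precedes it below -/
import Mathlib

section
/- Let S = ⟨S, δ, L⟩ and S' = ⟨S', δ', L'⟩ be FLTSs witnessed w.r.t. f∃ΔK^0 and Z a crisp simulation between them. Then for every x ∈ S and x' ∈ S', if Z(x,x') holds, then φ^S(x) ≤ φ^S'(x') for all formulas φ of f∃ΔK^0. -/
/-!
Every connective of f∃ΔK^0 is a monotone operation on truth values, so the inequality passes
through formulas by structural induction. For `⟨ϱ⟩φ`, compare the two suprema term by term: a
transition of positive degree is matched by one of at least that degree between related states,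
while a transition of degree `0` contributes only `0 ⊗ v = 0`.
-/

open unitInterval

noncomputable section
attribute [local instance] Classical.propDecidable

instance : Fact ((0:ℝ) ≤ 1) := ⟨zero_le_one⟩

/-- A left-continuous t-norm on the unit interval `[0,1]`: a commutative, associative
binary operation with neutral element `1`, increasing in both arguments, that
distributes over suprema of nonempty sets (left-continuity). -/
structure Tnorm where
  mul : I → I → I
  mul_comm : ∀ x y, mul x y = mul y x
  mul_assoc : ∀ x y z, mul (mul x y) z = mul x (mul y z)
  mul_one : ∀ x, mul x 1 = x
  mul_le_mul : ∀ {a b c d : I}, a ≤ b → c ≤ d → mul a c ≤ mul b d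
  left_continuous : ∀ (x : I) (s : Set I), s.Nonempty → mul x (sSup s) = sSup (mul x '' s)

/-- The residuum of a t-norm: `(x ⇒ y) = sup {z | z ⊗ x ≤ y}`. -/
def Tnorm.res (T : Tnorm) (x y : I) : I := sSup {z : I | T.mul z x ≤ y}

/-- A fuzzy labeled transition system over actions `A`, propositions `P`, states `St`. -/
structure FLTS (A P St : Type) where
  delta : St → A → St → I
  label : St → P → I

/-- A crisp simulation between two FLTSs. -/
def IsSimulation {A P S S' : Type} (M : FLTS A P S) (M' : FLTS A P S')
    (Z : S → S' → Prop) : Prop :=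
  (∀ x x', Z x x' → ∀ p, M.label x p ≤ M'.label x' p) ∧
  (∀ x y x' (ρ : A), Z x x' → 0 < M.delta x ρ y →
    ∃ y', M.delta x ρ y ≤ M'.delta x' ρ y' ∧ Z y y')

/-- Formulas of f∃ΔK^0. -/
inductive KForm (A P : Type) : Type
  | prop : P → KForm A P
  | baaz : KForm A P → KForm A P
  | and : KForm A P → KForm A P → KForm A P
  | impl : I → KForm A P → KForm A P
  | dia : A → KForm A P → KForm A P

/-- Semantics of f∃ΔK^0 formulas. -/
def kSem (T : Tnorm) {A P St : Type} (M : FLTS A P St) : KForm A P → St → I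
  | .prop p, x => M.label x p
  | .baaz φ, x => if kSem T M φ x = 1 then 1 else 0
  | .and φ ψ, x => min (kSem T M φ x) (kSem T M ψ x)
  | .impl a φ, x => T.res a (kSem T M φ x)
  | .dia ρ φ, x => ⨆ y, T.mul (M.delta x ρ y) (kSem T M φ y)

/-- An FLTS is witnessed w.r.t. f∃ΔK^0: the supremum in the semantic clause for
`⟨ϱ⟩φ` is always attained by a greatest element. -/
def WitnessedK (T : Tnorm) {A P St : Type} (M : FLTS A P St) : Prop :=
  ∀ (φ : KForm A P) (ρ : A) (x : St), ∃ y : St, ∀ z : St,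
    T.mul (M.delta x ρ z) (kSem T M φ z) ≤ T.mul (M.delta x ρ y) (kSem T M φ y)

theorem monotone_ite_eq_top {α β : Type*} [PartialOrder α] [OrderTop α] [Preorder β]
    [DecidablePred fun u : α => u = ⊤] {b c : β} (hbc : b ≤ c) :
    Monotone fun u : α => if u = ⊤ then c else b := by
  intro u v huv
  by_cases hu : u = ⊤
  · have hv : v = ⊤ := top_le_iff.mp (hu ▸ huv)
    simp only [hu, hv, le_refl]
  · simp only [if_neg hu]
    split_ifs
    exacts [hbc, le_rfl]

namespace Tnorm

variable (T : Tnorm)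

theorem mul_le_left (u v : I) : T.mul u v ≤ u :=
  (T.mul_le_mul le_rfl unitInterval.le_one').trans_eq (T.mul_one u)

protected theorem zero_mul (v : I) : T.mul 0 v = 0 :=
  le_antisymm (T.mul_le_left 0 v) unitInterval.nonneg'

theorem res_monotone_right (a : I) : Monotone (T.res a) :=
  fun _ _ huv => sSup_le_sSup fun _ hz => le_trans hz huv

end Tnorm

/-- The fuzzy possibility operator of the action `ρ`. It interprets `⟨ρ⟩`, but acts on arbitrary
fuzzy sets of states, not only on those defined by formulas. -/
def FLTS.possibility {A P St : Type} (T : Tnorm) (M : FLTS A P St) (ρ : A) (f : St → I) (x : St) :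
    I :=
  ⨆ y, T.mul (M.delta x ρ y) (f y)

theorem IsSimulation.possibility_le {A P S S' : Type} {M : FLTS A P S} {M' : FLTS A P S'}
    {Z : S → S' → Prop} (hZ : IsSimulation M M' Z) (T : Tnorm) (ρ : A) {f : S → I} {f' : S' → I}
    (hf : ∀ y y', Z y y' → f y ≤ f' y') {x : S} {x' : S'} (hx : Z x x') :
    M.possibility T ρ f x ≤ M'.possibility T ρ f' x' := by
  refine iSup_le fun y => ?_
  rcases (unitInterval.nonneg' : 0 ≤ M.delta x ρ y).eq_or_lt with hzero | hpos
  · rw [← hzero, T.zero_mul]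
    exact unitInterval.nonneg'
  · obtain ⟨y', hdelta, hy⟩ := hZ.2 x y x' ρ hx hpos
    calc
      T.mul (M.delta x ρ y) (f y) ≤ T.mul (M'.delta x' ρ y') (f' y') :=
        T.mul_le_mul hdelta (hf y y' hy)
      _ ≤ M'.possibility T ρ f' x' :=
        le_iSup (fun z' => T.mul (M'.delta x' ρ z') (f' z')) y'

theorem preservation_simulation_feK0_general {A P S S' : Type} (T : Tnorm) (M : FLTS A P S)
    (M' : FLTS A P S') (Z : S → S' → Prop) (hZ : IsSimulation M M' Z) (x : S) (x' : S')
    (hx : Z x x') (φ : KForm A P) : kSem T M φ x ≤ kSem T M' φ x' := by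
  induction φ generalizing x x' with
  | prop p => exact hZ.1 x x' hx p
  | baaz φ ih => exact monotone_ite_eq_top (α := I) zero_le_one (ih x x' hx)
  | and φ ψ ihφ ihψ => exact min_le_min (ihφ x x' hx) (ihψ x x' hx)
  | impl a φ ih => exact T.res_monotone_right a (ih x x' hx)
  | dia ρ φ ih => exact hZ.possibility_le T ρ ih hx

/-- Formulas of f∃ΔK^0 are preserved under crisp simulations between FLTSs
witnessed w.r.t. f∃ΔK^0. -/
theorem preservation_simulation_feK0
    {A P S S' : Type} [Nonempty A] [Nonempty P] [Nonempty S] [Nonempty S']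
    (T : Tnorm) (M : FLTS A P S) (M' : FLTS A P S')
    (hM : WitnessedK T M) (hM' : WitnessedK T M')
    (Z : S → S' → Prop) (hZ : IsSimulation M M' Z) :
    ∀ (x : S) (x' : S'), Z x x' →
      ∀ φ : KForm A P, kSem T M φ x ≤ kSem T M' φ x' :=
  preservation_simulation_feK0_general T M M' Z hZ
end
end

section
/- Every image-finite FLTS is modally saturated w.r.t. f∃ΔK^0. -/
open unitInterval

noncomputable section
attribute [local instance] Classical.propDecidable

/-- An FLTS is image-finite if every state has finitely many positive successors
for each action. -/
def ImageFinite {A P St : Type} (M : FLTS A P St) : Prop :=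
  ∀ (x : St) (ρ : A), {y : St | 0 < M.delta x ρ y}.Finite

/-- An FLTS is modally saturated w.r.t. f∃ΔK^0. Here `Ψ.inf (fun φ => kSem T M φ y)`
is the value of the conjunction `⋀Ψ` at `y` (the empty conjunction has value `1 = ⊤`). -/
def ModallySaturated (T : Tnorm) {A P St : Type} (M : FLTS A P St) : Prop :=
  ∀ (x : St) (a : I) (ρ : A) (Γ : Set (KForm A P)), 0 < a → Γ.Infinite →
    (∀ Ψ : Finset (KForm A P), ↑Ψ ⊆ Γ →
      ∃ y : St, a ≤ T.mul (M.delta x ρ y) (Ψ.inf fun φ => kSem T M φ y)) →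
    ∃ y : St, a ≤ M.delta x ρ y ∧ ∀ φ ∈ Γ, 0 < kSem T M φ y

/-!
A t-norm lies below the minimum, so a witness for a finite subset of `Γ` is a successor of degree at
least `a` at which all members of that subset are at least `a`. There are only finitely many such
successors: if at each of them some formula of `Γ` were below `a`, collecting one such formula per
successor would give a finite subset of `Γ` without a witness.
-/

namespace Tnorm

variable (T : Tnorm) (x y : I)

theorem mul_le_left_s3 : T.mul x y ≤ x :=
  (T.mul_le_mul le_rfl le_one').trans_eq (T.mul_one x)

theorem mul_le_right : T.mul x y ≤ y :=
  (T.mul_comm x y).trans_le (T.mul_le_left_s3 y x)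

end Tnorm

theorem exists_mem_forall_of_forall_finset {α ι : Type*} {s : Set α} (hs : s.Finite)
    {t : Set ι} {r : ι → α → Prop}
    (h : ∀ u : Finset ι, ↑u ⊆ t → ∃ y ∈ s, ∀ i ∈ u, r i y) :
    ∃ y ∈ s, ∀ i ∈ t, r i y := by
  by_contra! hviolated
  choose f hft hfr using fun y : s => hviolated y y.2
  have : Finite s := hs
  have hrange : (Set.range f).Finite := Set.finite_range f
  have hrange_subset : ↑hrange.toFinset ⊆ t := by
    rw [hrange.coe_toFinset]
    exact Set.range_subset_iff.mpr hft
  obtain ⟨y, hys, hy⟩ := h hrange.toFinset hrange_subset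
  exact hfr ⟨y, hys⟩ (hy _ (hrange.mem_toFinset.mpr (Set.mem_range_self _)))

/-- Here `d y` stands for the degree of a transition from a fixed state to `y`, and `v φ y` for the
truth value of a formula `φ` at `y`. -/
theorem imageFinite_modallySaturated_general {α ι : Type*} (T : Tnorm) {d : α → I}
    {v : ι → α → I} {Γ : Set ι} {a : I} (hfin : {y | a ≤ d y}.Finite)
    (h : ∀ Ψ : Finset ι, ↑Ψ ⊆ Γ → ∃ y, a ≤ T.mul (d y) (Ψ.inf fun φ => v φ y)) :
    ∃ y, a ≤ d y ∧ ∀ φ ∈ Γ, a ≤ v φ y := by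
  refine exists_mem_forall_of_forall_finset hfin fun Ψ hΨ => ?_
  obtain ⟨y, hy⟩ := h Ψ hΨ
  exact ⟨y, hy.trans (T.mul_le_left_s3 _ _),
    Finset.le_inf_iff.mp (hy.trans (T.mul_le_right _ _))⟩

/-- Every image-finite FLTS is modally saturated w.r.t. f∃ΔK^0. -/
theorem imageFinite_modallySaturated
    {A P St : Type} [Nonempty A] [Nonempty P] [Nonempty St]
    (T : Tnorm) (M : FLTS A P St) (h : ImageFinite M) :
    ModallySaturated T M := by
  intro x a ρ Γ ha _ hΓ
  have hfin : {y | a ≤ M.delta x ρ y}.Finite := (h x ρ).subset fun _ => ha.trans_le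
  obtain ⟨y, hδ, hφ⟩ := imageFinite_modallySaturated_general T hfin hΓ
  exact ⟨y, hδ, fun φ hmem => ha.trans_le (hφ φ hmem)⟩
end
end

section
/- Let S = ⟨S, δ, L⟩ and S' = ⟨S', δ', L'⟩ be FLTSs that are witnessed and modally saturated w.r.t. f∃ΔK^0. Then the relation Z = {(x,x') ∈ S × S' | φ^S(x) ≤ φ^S'(x') for all formulas φ of f∃ΔK^0} is the largest crisp simulation between S and S' (i.e., Z is a simulation and every simulation between S and S' is contained in Z). -/
open unitInterval

noncomputable section
attribute [local instance] Classical.propDecidable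

/-!
A simulation preserves formula values from left to right by induction on the formula. Conversely,
suppose every formula is at least as true at `x'` as at `x`, and `y` is a successor of `x` of degree
`d > 0`. The formula `Δ(a → φ)` has value `1` where `φ` has value at least `a`, and `0` elsewhere.
Let `Γ` consist of the formulas `Δ(φ(y) → φ)`, all of which have value `1` at `y`. If `χ` is a
finite conjunction from `Γ`, then `⟨ρ⟩χ` has value at least `d` at `x`, hence at `x'`, and
witnessedness provides a successor of `x'` realising this value. By modal saturation some `y'` of
degree at least `d` gives every member of `Γ` a positive value, which means `φ(y) ≤ φ(y')` for
every `φ`.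
-/

namespace Tnorm

variable (T : Tnorm) (a b : I)

theorem one_mul : T.mul 1 a = a := by
  rw [T.mul_comm, T.mul_one]

theorem zero_mul_s4 : T.mul 0 a = 0 := by
  refine le_antisymm ?_ nonneg'
  calc T.mul 0 a ≤ T.mul 0 1 := T.mul_le_mul le_rfl le_one'
    _ = 0 := T.mul_one 0

theorem res_mul_le : T.mul (T.res a b) a ≤ b := by
  have hne : {z : I | T.mul z a ≤ b}.Nonempty := ⟨0, (T.zero_mul_s4 a).trans_le nonneg'⟩
  rw [T.mul_comm, res, T.left_continuous a _ hne]
  refine sSup_le ?_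
  rintro _ ⟨z, hz, rfl⟩
  exact (T.mul_comm a z).trans_le hz

theorem gc_mul_res : GaloisConnection (fun z => T.mul z a) (T.res a) := fun _ b =>
  ⟨fun h => le_sSup h, fun h => (T.mul_le_mul h le_rfl).trans (T.res_mul_le a b)⟩

theorem res_eq_one_iff : T.res a b = 1 ↔ a ≤ b :=
  calc T.res a b = 1 ↔ 1 ≤ T.res a b := ⟨ge_of_eq, le_one'.antisymm⟩
    _ ↔ T.mul 1 a ≤ b := (T.gc_mul_res a 1 b).symm
    _ ↔ a ≤ b := by rw [T.one_mul]

end Tnorm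

section Semantics

variable {A P St : Type} (T : Tnorm) (M : FLTS A P St)

instance KForm.instInfinite [Nonempty P] : Infinite (KForm A P) := by
  obtain ⟨p⟩ := ‹Nonempty P›
  have : Infinite I := Set.Icc.infinite zero_lt_one
  exact Infinite.of_injective (fun a : I => .impl a (.prop p)) fun _ _ h => (KForm.impl.inj h).1

/-- The formula `Δ(a → φ)`, the crisp test that the value of `φ` is at least `a`. -/
def KForm.atLeast (a : I) (φ : KForm A P) : KForm A P :=
  .baaz (.impl a φ)

theorem kSem_atLeast (a : I) (φ : KForm A P) (x : St) :
    kSem T M (.atLeast a φ) x = if a ≤ kSem T M φ x then 1 else 0 := by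
  simp only [KForm.atLeast, kSem, T.res_eq_one_iff]

theorem kSem_atLeast_pos_iff {a : I} {φ : KForm A P} {x : St} :
    0 < kSem T M (.atLeast a φ) x ↔ a ≤ kSem T M φ x := by
  rw [kSem_atLeast]
  split_ifs with h <;> simp [h]

theorem exists_kSem_eq_inf [Nonempty P] (Ψ : Finset (KForm A P)) :
    ∃ χ : KForm A P, ∀ (St : Type) (M : FLTS A P St) (x : St),
      kSem T M χ x = Ψ.inf fun φ => kSem T M φ x := by
  induction Ψ using Finset.induction_on with
  | empty =>
    -- The language has no constant `1`; the formula `0 → p` stands in for it.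
    obtain ⟨p⟩ := ‹Nonempty P›
    exact ⟨.impl 0 (.prop p), fun _ _ _ => (T.res_eq_one_iff _ _).2 nonneg'⟩
  | insert φ Ψ _ ih =>
    obtain ⟨χ, hχ⟩ := ih
    refine ⟨.and φ χ, fun St M x => ?_⟩
    rw [Finset.inf_insert, ← hχ]
    rfl

theorem mul_le_kSem_dia (ρ : A) (φ : KForm A P) (x y : St) :
    T.mul (M.delta x ρ y) (kSem T M φ y) ≤ kSem T M (.dia ρ φ) x :=
  le_iSup (fun z => T.mul (M.delta x ρ z) (kSem T M φ z)) y

variable {T M}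

theorem WitnessedK.exists_kSem_dia_eq_mul (hw : WitnessedK T M) (ρ : A) (φ : KForm A P) (x : St) :
    ∃ y, kSem T M (.dia ρ φ) x = T.mul (M.delta x ρ y) (kSem T M φ y) :=
  (hw φ ρ x).imp fun y hy => (iSup_le hy).antisymm (mul_le_kSem_dia T M ρ φ x y)

end Semantics

section Simulation

variable {A P S S' : Type} {T : Tnorm} {M : FLTS A P S} {M' : FLTS A P S'}

theorem IsSimulation.kSem_le {Z : S → S' → Prop} (hZ : IsSimulation M M' Z) {x : S} {x' : S'}
    (hxx' : Z x x') (φ : KForm A P) : kSem T M φ x ≤ kSem T M' φ x' := by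
  induction φ generalizing x x' with
  | prop p => exact hZ.1 x x' hxx' p
  | baaz φ ih =>
    simp only [kSem]
    split_ifs with hx hx'
    · exact le_rfl
    · exact absurd (le_one'.antisymm (hx.ge.trans (ih hxx'))) hx'
    · exact nonneg'
    · exact le_rfl
  | and φ ψ ihφ ihψ => exact min_le_min (ihφ hxx') (ihψ hxx')
  | impl a φ ih => exact (T.gc_mul_res a).monotone_u (ih hxx')
  | dia ρ φ ih =>
    refine iSup_le fun y => ?_
    obtain hδ | hδ := (nonneg' : 0 ≤ M.delta x ρ y).eq_or_lt
    · rw [← hδ, T.zero_mul_s4]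
      exact nonneg'
    · obtain ⟨y', hle, hyy'⟩ := hZ.2 x y x' ρ hxx' hδ
      exact (T.mul_le_mul hle (ih hyy')).trans (mul_le_kSem_dia T M' ρ φ x' y')

variable (T M M') in
/-- The logical preorder between states of two transition systems: every formula of f∃ΔK^0 is at
least as true at the second state as at the first. -/
def ModalLE (x : S) (x' : S') : Prop :=
  ∀ φ : KForm A P, kSem T M φ x ≤ kSem T M' φ x'

variable [Nonempty P] {x y : S} {x' : S'} {ρ : A}

theorem ModalLE.exists_delta_le_mul_inf (hxx' : ModalLE T M M' x x') (hw : WitnessedK T M')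
    {Ψ : Finset (KForm A P)} (hΨ : ∀ φ ∈ Ψ, kSem T M φ y = 1) :
    ∃ y', M.delta x ρ y ≤ T.mul (M'.delta x' ρ y') (Ψ.inf fun φ => kSem T M' φ y') := by
  obtain ⟨χ, hχ⟩ := exists_kSem_eq_inf T Ψ
  have hχy : 1 ≤ kSem T M χ y := by
    rw [hχ]
    exact Finset.le_inf fun φ hφ => (hΨ φ hφ).ge
  obtain ⟨y', hy'⟩ := hw.exists_kSem_dia_eq_mul ρ χ x'
  refine ⟨y', ?_⟩
  calc M.delta x ρ y = T.mul (M.delta x ρ y) 1 := (T.mul_one _).symm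
    _ ≤ T.mul (M.delta x ρ y) (kSem T M χ y) := T.mul_le_mul le_rfl hχy
    _ ≤ kSem T M (.dia ρ χ) x := mul_le_kSem_dia T M ρ χ x y
    _ ≤ kSem T M' (.dia ρ χ) x' := hxx' _
    _ = T.mul (M'.delta x' ρ y') (kSem T M' χ y') := hy'
    _ = T.mul (M'.delta x' ρ y') (Ψ.inf fun φ => kSem T M' φ y') := by rw [hχ]

theorem ModalLE.exists_delta_le (hxx' : ModalLE T M M' x x') (hw : WitnessedK T M')
    (hs : ModallySaturated T M') (hδ : 0 < M.delta x ρ y) :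
    ∃ y', M.delta x ρ y ≤ M'.delta x' ρ y' ∧ ModalLE T M M' y y' := by
  let test (φ : KForm A P) : KForm A P := .atLeast (kSem T M φ y) φ
  have test_injective : Function.Injective test := fun _ _ h =>
    (KForm.impl.inj (KForm.baaz.inj h)).2
  have kSem_test (φ) : kSem T M (test φ) y = 1 := by
    rw [kSem_atLeast, if_pos le_rfl]
  have test_satisfiable (Ψ : Finset (KForm A P)) (hΨ : ↑Ψ ⊆ Set.range test) :
      ∃ y', M.delta x ρ y ≤ T.mul (M'.delta x' ρ y') (Ψ.inf fun φ => kSem T M' φ y') :=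
    hxx'.exists_delta_le_mul_inf hw fun ψ hψ => by
      obtain ⟨φ, rfl⟩ := hΨ hψ
      exact kSem_test φ
  obtain ⟨y', hle, hpos⟩ := hs x' (M.delta x ρ y) ρ (Set.range test) hδ
    (Set.infinite_range_of_injective test_injective) test_satisfiable
  exact ⟨y', hle, fun φ => (kSem_atLeast_pos_iff T M').1 (hpos _ ⟨φ, rfl⟩)⟩

theorem isSimulation_modalLE (hw : WitnessedK T M') (hs : ModallySaturated T M') :
    IsSimulation M M' (ModalLE T M M') :=
  ⟨fun _ _ hxx' p => hxx' (.prop p), fun _ _ _ _ hxx' hδ => hxx'.exists_delta_le hw hs hδ⟩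

end Simulation

theorem hennessyMilner_simulation_feK0_general {A P S S' : Type} [Nonempty P]
    (T : Tnorm) (M : FLTS A P S) (M' : FLTS A P S')
    (hw : WitnessedK T M') (hs : ModallySaturated T M') :
    IsSimulation M M' (ModalLE T M M') ∧
    ∀ Z : S → S' → Prop, IsSimulation M M' Z → ∀ x x', Z x x' → ModalLE T M M' x x' :=
  ⟨isSimulation_modalLE hw hs, fun _ hZ _ _ hxx' _ => hZ.kSem_le hxx' _⟩

/-- Hennessy-Milner property of crisp simulations: for FLTSs witnessed and modally
saturated w.r.t. f∃ΔK^0, the relation consisting of the pairs `(x,x')` with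
`φ^S(x) ≤ φ^S'(x')` for all f∃ΔK^0 formulas `φ` is the largest crisp simulation. -/
theorem hennessyMilner_simulation_feK0
    {A P S S' : Type} [Nonempty A] [Nonempty P] [Nonempty S] [Nonempty S']
    (T : Tnorm) (M : FLTS A P S) (M' : FLTS A P S')
    (hwM : WitnessedK T M) (hwM' : WitnessedK T M')
    (hsM : ModallySaturated T M) (hsM' : ModallySaturated T M') :
    IsSimulation M M' (fun x x' => ∀ φ : KForm A P, kSem T M φ x ≤ kSem T M' φ x') ∧
    (∀ Z : S → S' → Prop, IsSimulation M M' Z →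
      ∀ x x', Z x x' → ∀ φ : KForm A P, kSem T M φ x ≤ kSem T M' φ x') :=
  hennessyMilner_simulation_feK0_general T M M' hwM' hsM'
end
end

section
/- For any two FLTSs S and S', the largest crisp simulation between S and S' exists (i.e., there is a simulation containing every simulation between S and S'). Moreover, for any FLTS S, the largest crisp auto-simulation of S is a pre-order (reflexive and transitive relation) on its set of states. -/
open unitInterval

noncomputable section

theorem isSimulation_eq {A P S : Type} (M : FLTS A P S) : IsSimulation M M (· = ·) := by
  constructor
  · rintro x _ rfl p
    exact le_rfl
  · rintro x y _ ρ rfl _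
    exact ⟨y, le_rfl, rfl⟩

namespace IsSimulation

variable {A P S S' S'' : Type} {M : FLTS A P S} {M' : FLTS A P S'} {M'' : FLTS A P S''}

theorem sSup {C : Set (S → S' → Prop)} (hC : ∀ Z ∈ C, IsSimulation M M' Z) :
    IsSimulation M M' (sSup C) := by
  simp only [IsSimulation, binary_relation_sSup_iff]
  constructor
  · rintro x x' ⟨Z, hZC, hxx'⟩
    exact (hC Z hZC).1 x x' hxx'
  · rintro x y x' ρ ⟨Z, hZC, hxx'⟩ hpos
    obtain ⟨y', hle, hyy'⟩ := (hC Z hZC).2 x y x' ρ hxx' hpos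
    exact ⟨y', hle, Z, hZC, hyy'⟩

theorem comp {Z : S → S' → Prop} {Z' : S' → S'' → Prop} (hZ : IsSimulation M M' Z)
    (hZ' : IsSimulation M' M'' Z') : IsSimulation M M'' (Relation.Comp Z Z') := by
  constructor
  · rintro x x'' ⟨x', hxx', hx'x''⟩ p
    exact (hZ.1 x x' hxx' p).trans (hZ'.1 x' x'' hx'x'' p)
  · rintro x y x'' ρ ⟨x', hxx', hx'x''⟩ hpos
    obtain ⟨y', hle, hyy'⟩ := hZ.2 x y x' ρ hxx' hpos
    obtain ⟨y'', hle', hy'y''⟩ := hZ'.2 x' y' x'' ρ hx'x'' (hpos.trans_le hle)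
    exact ⟨y'', hle.trans hle', y', hyy', hy'y''⟩

end IsSimulation

namespace FLTS

variable {A P S S' S'' : Type} {M : FLTS A P S} {M' : FLTS A P S'} {M'' : FLTS A P S''}

/-- Similarity of states of two FLTSs, i.e. the largest simulation between them, encoded as the
supremum of all simulations in the complete lattice of relations `S → S' → Prop`. -/
def Similar (M : FLTS A P S) (M' : FLTS A P S') : S → S' → Prop :=
  sSup {Z | IsSimulation M M' Z}

theorem isGreatest_similar (M : FLTS A P S) (M' : FLTS A P S') :
    IsGreatest {Z | IsSimulation M M' Z} (Similar M M') :=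
  ⟨IsSimulation.sSup fun _ hZ => hZ, fun _ hZ => le_sSup hZ⟩

theorem Similar.refl (M : FLTS A P S) (x : S) : Similar M M x x :=
  (isGreatest_similar M M).2 (isSimulation_eq M) x x rfl

theorem Similar.trans {x : S} {x' : S'} {x'' : S''} (hxx' : Similar M M' x x')
    (hx'x'' : Similar M' M'' x' x'') : Similar M M'' x x'' :=
  have hcomp : IsSimulation M M'' (Relation.Comp (Similar M M') (Similar M' M'')) :=
    (isGreatest_similar M M').1.comp (isGreatest_similar M' M'').1
  (isGreatest_similar M M'').2 hcomp x x'' ⟨x', hxx', hx'x''⟩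

end FLTS

/-- The largest crisp simulation between two FLTSs exists, and the largest crisp
auto-simulation of an FLTS is a pre-order (reflexive and transitive). -/
theorem largest_simulation_exists_and_preorder {A P : Type} [Nonempty A] [Nonempty P] :
    (∀ (S S' : Type) [Nonempty S] [Nonempty S'] (M : FLTS A P S) (M' : FLTS A P S'),
      ∃ Z : S → S' → Prop, IsSimulation M M' Z ∧
        ∀ Z' : S → S' → Prop, IsSimulation M M' Z' → ∀ x x', Z' x x' → Z x x') ∧
    (∀ (S : Type) [Nonempty S] (M : FLTS A P S) (Z : S → S → Prop),
      IsSimulation M M Z →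
      (∀ Z' : S → S → Prop, IsSimulation M M Z' → ∀ x y, Z' x y → Z x y) →
      Reflexive Z ∧ Transitive Z) := by
  constructor
  · intro S S' _ _ M M'
    exact ⟨M.Similar M', M.isGreatest_similar M'⟩
  · intro S _ M Z hZ hmax
    obtain rfl : Z = M.Similar M := IsGreatest.unique ⟨hZ, hmax⟩ (M.isGreatest_similar M)
    exact ⟨FLTS.Similar.refl M, fun _ _ _ => FLTS.Similar.trans⟩
end
end

section
/- For any two FLTSs S and S', the largest crisp directed simulation between S and S' exists (i.e., there is a directed simulation containing every directed simulation between S and S'). Moreover, the identity relation {(x,x) | x ∈ S} is a crisp directed simulation between any FLTS S and itself, and the largest crisp directed auto-simulation of S is a pre-order (reflexive and transitive relation) on its set of states. -/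
open unitInterval

noncomputable section

/-- A crisp directed simulation between two FLTSs. -/
def IsDirSimulation {A P S S' : Type} (M : FLTS A P S) (M' : FLTS A P S')
    (Z : S → S' → Prop) : Prop :=
  (∀ x x', Z x x' → ∀ p, M.label x p ≤ M'.label x' p) ∧
  (∀ x y x' (ρ : A), Z x x' → 0 < M.delta x ρ y →
    ∃ y', M.delta x ρ y ≤ M'.delta x' ρ y' ∧ Z y y') ∧
  (∀ x x' y' (ρ : A), Z x x' → 0 < M'.delta x' ρ y' →
    ∃ y, M'.delta x' ρ y' ≤ M.delta x ρ y ∧ Z y y')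

/-!
Directed simulations are closed under arbitrary unions, so the union of all of them is the largest.
Equality is a directed simulation and directed simulations compose; hence a largest
auto-simulation `Z` contains both equality and `Z ∘ Z`.
-/

namespace IsDirSimulation

variable {A P S S' S'' : Type} {M : FLTS A P S} {M' : FLTS A P S'} {M'' : FLTS A P S''}

protected theorem sSup {C : Set (S → S' → Prop)} (hC : ∀ Z ∈ C, IsDirSimulation M M' Z) :
    IsDirSimulation M M' (sSup C) := by
  simp only [IsDirSimulation, binary_relation_sSup_iff]
  refine ⟨?label, ?forth, ?back⟩
  case label =>
    rintro x x' ⟨Z, hZC, hxx'⟩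
    exact (hC Z hZC).1 x x' hxx'
  case forth =>
    rintro x y x' ρ ⟨Z, hZC, hxx'⟩ hpos
    obtain ⟨y', hle, hyy'⟩ := (hC Z hZC).2.1 x y x' ρ hxx' hpos
    exact ⟨y', hle, Z, hZC, hyy'⟩
  case back =>
    rintro x x' y' ρ ⟨Z, hZC, hxx'⟩ hpos
    obtain ⟨y, hle, hyy'⟩ := (hC Z hZC).2.2 x x' y' ρ hxx' hpos
    exact ⟨y, hle, Z, hZC, hyy'⟩

variable (M M') in
theorem isGreatest_sSup :
    IsGreatest {Z | IsDirSimulation M M' Z} (sSup {Z | IsDirSimulation M M' Z}) :=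
  ⟨IsDirSimulation.sSup fun _ hZ => hZ, fun _ hZ => le_sSup hZ⟩

variable (M) in
protected theorem eq : IsDirSimulation M M (· = ·) := by
  refine ⟨?label, ?forth, ?back⟩
  case label =>
    rintro x _ rfl p
    exact le_rfl
  case forth =>
    rintro x y _ ρ rfl -
    exact ⟨y, le_rfl, rfl⟩
  case back =>
    rintro x _ y ρ rfl -
    exact ⟨y, le_rfl, rfl⟩

theorem comp {Z : S → S' → Prop} {Z' : S' → S'' → Prop}
    (hZ : IsDirSimulation M M' Z) (hZ' : IsDirSimulation M' M'' Z') :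
    IsDirSimulation M M'' (Relation.Comp Z Z') := by
  obtain ⟨label, forth, back⟩ := hZ
  obtain ⟨label', forth', back'⟩ := hZ'
  refine ⟨?label, ?forth, ?back⟩
  case label =>
    rintro x x'' ⟨x', hxx', hx'x''⟩ p
    exact (label x x' hxx' p).trans (label' x' x'' hx'x'' p)
  case forth =>
    rintro x y x'' ρ ⟨x', hxx', hx'x''⟩ hpos
    obtain ⟨y', hle, hyy'⟩ := forth x y x' ρ hxx' hpos
    obtain ⟨y'', hle', hy'y''⟩ := forth' x' y' x'' ρ hx'x'' (hpos.trans_le hle)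
    exact ⟨y'', hle.trans hle', y', hyy', hy'y''⟩
  case back =>
    rintro x x'' y'' ρ ⟨x', hxx', hx'x''⟩ hpos
    obtain ⟨y', hle', hy'y''⟩ := back' x' x'' y'' ρ hx'x'' hpos
    obtain ⟨y, hle, hyy'⟩ := back x x' y' ρ hxx' (hpos.trans_le hle')
    exact ⟨y, hle'.trans hle, y', hyy', hy'y''⟩

theorem isPreorder_of_isGreatest {Z : S → S → Prop}
    (hZ : IsGreatest {Z | IsDirSimulation M M Z} Z) : IsPreorder S Z where
  refl x := hZ.2 (IsDirSimulation.eq M) x x rfl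
  trans x y z hxy hyz := hZ.2 (hZ.1.comp hZ.1) x z ⟨y, hxy, hyz⟩

end IsDirSimulation

/-- The largest crisp directed simulation between two FLTSs exists, the identity
relation is a crisp directed auto-simulation, and the largest crisp directed
auto-simulation of an FLTS is a pre-order (reflexive and transitive). -/
theorem largest_dirSimulation_exists_and_preorder {A P : Type} [Nonempty A] [Nonempty P] :
    (∀ (S S' : Type) [Nonempty S] [Nonempty S'] (M : FLTS A P S) (M' : FLTS A P S'),
      ∃ Z : S → S' → Prop, IsDirSimulation M M' Z ∧
        ∀ Z' : S → S' → Prop, IsDirSimulation M M' Z' → ∀ x x', Z' x x' → Z x x') ∧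
    (∀ (S : Type) [Nonempty S] (M : FLTS A P S),
      IsDirSimulation M M (fun x y => x = y)) ∧
    (∀ (S : Type) [Nonempty S] (M : FLTS A P S) (Z : S → S → Prop),
      IsDirSimulation M M Z →
      (∀ Z' : S → S → Prop, IsDirSimulation M M Z' → ∀ x y, Z' x y → Z x y) →
      Reflexive Z ∧ Transitive Z) := by
  refine ⟨fun S S' _ _ M M' => ?largest, fun S _ M => IsDirSimulation.eq M,
    fun S _ M Z hZ hmax => ?preorder⟩
  case largest =>
    obtain ⟨hsim, hub⟩ := IsDirSimulation.isGreatest_sSup M M'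
    exact ⟨_, hsim, fun _ hZ' => hub hZ'⟩
  case preorder =>
    have hpre : IsPreorder S Z :=
      IsDirSimulation.isPreorder_of_isGreatest ⟨hZ, fun Z' hZ' => hmax Z' hZ'⟩
    exact ⟨hpre.refl, hpre.trans⟩
end
end
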